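/- Let Ω ⊂ ℝ^N (N ≥ 2) be a bounded connected open set, let ε > 0, and let a ≤ 1. Define f_a(t) = e^t − 1 − a·t. Then every weak Neumann solution u of −εΔu = f_a(u) in Ω with u ≥ 0 on Ω is identically zero. -/

import Mathlib

open MeasureTheory Bornology
open scoped RealInnerProductSpace

/-!
Testing the weak formulation with the constant function `1` kills the gradient term, so
`∫_Ω f(u) = 0`. For `a ≤ 1` the strict inequality `e^t > 1 + t` makes `f_a` positive on `(0, ∞)`,
so `f_a(u)` is a nonnegative continuous function with zero integral: it vanishes on `Ω`, and this
forces `u = 0`.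
-/

open Set

theorem eqOn_zero_of_setIntegral_eq_zero {X : Type*} [TopologicalSpace X] [MeasurableSpace X]
    [OpensMeasurableSpace X] {μ : Measure X} [μ.IsOpenPosMeasure] {U : Set X} {g : X → ℝ}
    (hU : IsOpen U) (hg : ContinuousOn g U) (hg_int : IntegrableOn g U μ)
    (hg_nonneg : ∀ x ∈ U, 0 ≤ g x) (hg_zero : ∫ x in U, g x ∂μ = 0) : EqOn g 0 U := by
  have hg_nonneg_ae : 0 ≤ᵐ[μ.restrict U] g := ae_restrict_of_forall_mem hU.measurableSet hg_nonneg
  have hg_ae : g =ᵐ[μ.restrict U] 0 :=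
    (setIntegral_eq_zero_iff_of_nonneg_ae hg_nonneg_ae hg_int).1 hg_zero
  exact Measure.eqOn_open_of_ae_eq hg_ae hU hg continuousOn_const

/-- Weak solutions `u` of `-ε Δu = f(u)` in `Ω` with homogeneous Neumann condition, integrals being
taken with respect to `μ`. The Neumann condition is encoded by testing against all `C¹` functions
on the whole space, which need not vanish on the boundary of `Ω`. -/
structure IsWeakNeumannSolution {E : Type*} [NormedAddCommGroup E] [InnerProductSpace ℝ E]
    [CompleteSpace E] [MeasurableSpace E] (μ : Measure E) (ε : ℝ) (f : ℝ → ℝ) (Ω : Set E)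
    (u : E → ℝ) : Prop where
  exists_contDiffOn : ∃ V, IsOpen V ∧ closure Ω ⊆ V ∧ ContDiffOn ℝ 1 u V
  integral_eq : ∀ φ : E → ℝ, ContDiff ℝ 1 φ →
    ε * ∫ x in Ω, ⟪gradient u x, gradient φ x⟫ ∂μ = ∫ x in Ω, f (u x) * φ x ∂μ

namespace IsWeakNeumannSolution

section CompleteSpace

variable {E : Type*} [NormedAddCommGroup E] [InnerProductSpace ℝ E] [CompleteSpace E]
  [MeasurableSpace E] {μ : Measure E} {ε : ℝ} {f : ℝ → ℝ} {Ω : Set E} {u : E → ℝ}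

theorem continuousOn_closure (hu : IsWeakNeumannSolution μ ε f Ω u) :
    ContinuousOn u (closure Ω) :=
  let ⟨_, _, hΩV, huV⟩ := hu.exists_contDiffOn
  huV.continuousOn.mono hΩV

theorem setIntegral_eq_zero (hu : IsWeakNeumannSolution μ ε f Ω u) :
    ∫ x in Ω, f (u x) ∂μ = 0 := by
  simpa only [gradient_fun_const, inner_zero_right, integral_zero, mul_zero, mul_one] using
    (hu.integral_eq (fun _ ↦ 1) contDiff_const).symm

end CompleteSpace

section FiniteDimensional

variable {E : Type*} [NormedAddCommGroup E] [InnerProductSpace ℝ E] [FiniteDimensional ℝ E]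
  [MeasurableSpace E] [OpensMeasurableSpace E] {μ : Measure E} [IsFiniteMeasureOnCompacts μ]
  [μ.IsOpenPosMeasure] {ε : ℝ} {f : ℝ → ℝ} {Ω : Set E} {u : E → ℝ}

theorem eqOn_comp_zero (hu : IsWeakNeumannSolution μ ε f Ω u) (hΩ_open : IsOpen Ω)
    (hΩ_bdd : IsBounded Ω) (hfu : ContinuousOn (f ∘ u) (closure Ω))
    (hfu_nonneg : ∀ x ∈ Ω, 0 ≤ f (u x)) : EqOn (f ∘ u) 0 Ω :=
  have hfu_int : IntegrableOn (f ∘ u) Ω μ :=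
    (hfu.integrableOn_compact hΩ_bdd.isCompact_closure).mono_set subset_closure
  eqOn_zero_of_setIntegral_eq_zero hΩ_open (hfu.mono subset_closure) hfu_int hfu_nonneg
    hu.setIntegral_eq_zero

end FiniteDimensional

end IsWeakNeumannSolution

theorem stmt_5_general {E : Type*} [NormedAddCommGroup E] [InnerProductSpace ℝ E]
    [FiniteDimensional ℝ E] [MeasurableSpace E] [OpensMeasurableSpace E] {μ : Measure E}
    [IsFiniteMeasureOnCompacts μ] [μ.IsOpenPosMeasure] {ε : ℝ} {f : ℝ → ℝ} {Ω : Set E} {u : E → ℝ}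
    (hΩ_open : IsOpen Ω) (hΩ_bdd : IsBounded Ω) (hf : ContinuousOn f (Ici 0))
    (hf_pos : ∀ t, 0 < t → 0 < f t) (hu : IsWeakNeumannSolution μ ε f Ω u)
    (hu_nonneg : ∀ x ∈ Ω, 0 ≤ u x) : ∀ x ∈ Ω, u x = 0 := by
  have hu_closure : MapsTo u (closure Ω) (Ici 0) := by
    have hu_Ici : MapsTo u Ω (Ici 0) := hu_nonneg
    simpa only [closure_Ici] using hu_Ici.closure_of_continuousOn hu.continuousOn_closure
  have hf_nonneg : MapsTo f (Ici 0) (Ici 0) := by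
    have hf_Ioi : MapsTo f (Ioi 0) (Ioi 0) := hf_pos
    simpa only [closure_Ioi] using hf_Ioi.closure_of_continuousOn (by rwa [closure_Ioi])
  have hfu_zero : EqOn (f ∘ u) 0 Ω :=
    hu.eqOn_comp_zero hΩ_open hΩ_bdd (hf.comp hu.continuousOn_closure hu_closure)
      fun x hx ↦ hf_nonneg (hu_nonneg x hx)
  intro x hx
  by_contra hux
  exact (hf_pos (u x) ((hu_nonneg x hx).lt_of_ne' hux)).ne' (hfu_zero hx)

theorem exp_sub_one_sub_mul_pos {a t : ℝ} (ha : a ≤ 1) (ht : 0 < t) :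
    0 < Real.exp t - 1 - a * t := by
  have hexp : t + 1 < Real.exp t := Real.add_one_lt_exp ht.ne'
  have hat : a * t ≤ t := mul_le_of_le_one_left ht.le ha
  linarith

/-- For `a ≤ 1` and `f_a(t) = e^t - 1 - a t`, every nonnegative weak
Neumann solution of `-εΔu = f_a(u)` in a bounded connected open `Ω ⊆ ℝ^N`, `N ≥ 2`,
is identically zero. -/
theorem stmt_5 {N : ℕ} (hN : 2 ≤ N)
    (Ω : Set (EuclideanSpace ℝ (Fin N))) (hΩ_open : IsOpen Ω)
    (hΩ_bdd : IsBounded Ω) (hΩ_conn : IsConnected Ω)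
    (ε : ℝ) (hε : 0 < ε) (a : ℝ) (ha : a ≤ 1)
    (u : EuclideanSpace ℝ (Fin N) → ℝ)
    (V : Set (EuclideanSpace ℝ (Fin N))) (hV_open : IsOpen V)
    (hV : closure Ω ⊆ V) (hu : ContDiffOn ℝ 1 u V)
    (hweak : ∀ φ : EuclideanSpace ℝ (Fin N) → ℝ, ContDiff ℝ 1 φ →
      ε * ∫ x in Ω, ⟪gradient u x, gradient φ x⟫ =
        ∫ x in Ω, (Real.exp (u x) - 1 - a * u x) * φ x)
    (hu_nonneg : ∀ x ∈ Ω, 0 ≤ u x) :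
    ∀ x ∈ Ω, u x = 0 := by
  exact stmt_5_general (f := fun t ↦ Real.exp t - 1 - a * t) hΩ_open hΩ_bdd (by fun_prop)
    (fun _ ↦ exp_sub_one_sub_mul_pos ha) ⟨⟨V, hV_open, hV, hu⟩, hweak⟩ hu_nonneg
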